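/- Let V be a finite-dimensional complex vector space, n ∈ ℕ, α_1,…,α_n ∈ V*, v_1,…,v_n ∈ V, and let (J, ≻) be a linearly ordered set with elements j_1 ≺ ⋯ ≺ j_n and j'_1 ≺ ⋯ ≺ j'_n such that {j_1,…,j_n} ∩ {j'_1,…,j'_n} = ∅. Define operators A_1,…,A_{2n} on ΛV* by A_i = v_i⌟ for 1 ≤ i ≤ n and A_{n+m} = (α_m ∧ ·) for 1 ≤ m ≤ n, and assign to A_i the label j_i for i ≤ n and the label j'_{i−n} for i > n. Let π be the unique permutation of {1,…,2n} such that the labels of A_{π(1)}, A_{π(2)}, …, A_{π(2n)} are strictly increasing. Then the matrix M with entries M_{kl} = α_k(v_l)·1[j'_k ≻ j_l] satisfies det M = (−1)^{n(n−1)/2} · sgn(π) · (A_{π(1)} ∘ A_{π(2)} ∘ ⋯ ∘ A_{π(2n)})(1), where the right-hand side is evaluated on 1 ∈ Λ⁰V* = ℂ and is a scalar. -/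

import Mathlib

section Helpers

variable {W : Type*} [AddCommGroup W] [Module ℂ W]

/-- The operator attached to a letter. -/
noncomputable def opOf {n : ℕ} (α : Fin n → W) (v : Fin n → Module.Dual ℂ W) :
    Fin n ⊕ Fin n → (ExteriorAlgebra ℂ W →ₗ[ℂ] ExteriorAlgebra ℂ W)
  | Sum.inl l => CliffordAlgebra.contractLeft (Q := (0 : QuadraticForm ℂ W)) (v l)
  | Sum.inr k => LinearMap.mulLeft ℂ (ExteriorAlgebra.ι ℂ (α k))

/-- Apply a word of operators. -/
noncomputable def wordOp {n : ℕ} (α : Fin n → W) (v : Fin n → Module.Dual ℂ W)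
    (L : List (Fin n ⊕ Fin n)) (x : ExteriorAlgebra ℂ W) : ExteriorAlgebra ℂ W :=
  L.foldr (fun a acc => opOf α v a acc) x

theorem wordOp_append {n : ℕ} (α : Fin n → W) (v : Fin n → Module.Dual ℂ W)
    (s t : List (Fin n ⊕ Fin n)) (x : ExteriorAlgebra ℂ W) :
    wordOp α v (s ++ t) x = wordOp α v s (wordOp α v t x) := by
  simp [wordOp]

theorem wordOp_cons {n : ℕ} (α : Fin n → W) (v : Fin n → Module.Dual ℂ W)
    (a : Fin n ⊕ Fin n) (t : List (Fin n ⊕ Fin n)) (x : ExteriorAlgebra ℂ W) :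
    wordOp α v (a :: t) x = opOf α v a (wordOp α v t x) := by
  simp [wordOp]

theorem wordOp_sum {n : ℕ} (α : Fin n → W) (v : Fin n → Module.Dual ℂ W)
    (s : List (Fin n ⊕ Fin n)) {ι : Type*} (S : Finset ι) (c : ι → ℂ)
    (x : ι → ExteriorAlgebra ℂ W) :
    wordOp α v s (∑ i ∈ S, c i • x i) = ∑ i ∈ S, c i • wordOp α v s (x i) := by
  induction s with
  | nil => simp [wordOp]
  | cons a s ih => simp only [wordOp_cons, ih, map_sum, map_smul]

theorem contract_word {n : ℕ} (α : Fin n → W) (v : Fin n → Module.Dual ℂ W)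
    (d : Module.Dual ℂ W) (ws : List (Fin n)) (hws : ws.Pairwise (· < ·)) :
    CliffordAlgebra.contractLeft (Q := (0 : QuadraticForm ℂ W)) d
      (wordOp α v (ws.map Sum.inr) 1) =
    ∑ k ∈ ws.toFinset, ((-1 : ℂ) ^ (ws.toFinset.filter (· < k)).card * d (α k)) •
      wordOp α v ((ws.erase k).map Sum.inr) 1 := by
  induction ws with
  | nil => simp [wordOp]
  | cons a ws ih =>
    rw [List.pairwise_cons] at hws
    obtain ⟨ha, hws⟩ := hws
    have hna : a ∉ ws.toFinset := by
      intro h; exact lt_irrefl _ (ha a (by simpa using h))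
    rw [List.map_cons, wordOp_cons]
    have h1 : CliffordAlgebra.contractLeft (Q := (0 : QuadraticForm ℂ W)) d
        (opOf α v (Sum.inr a) (wordOp α v (ws.map Sum.inr) 1)) =
        d (α a) • (wordOp α v (ws.map Sum.inr) 1) - ExteriorAlgebra.ι ℂ (α a) *
        CliffordAlgebra.contractLeft (Q := (0 : QuadraticForm ℂ W)) d
          (wordOp α v (ws.map Sum.inr) 1) :=
      CliffordAlgebra.contractLeft_ι_mul (Q := (0 : QuadraticForm ℂ W)) d (α a) _
    rw [h1, ih hws, List.toFinset_cons, Finset.sum_insert hna, sub_eq_add_neg]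
    congr 1
    · have : (insert a ws.toFinset).filter (· < a) = ∅ := by
        ext k
        simp only [Finset.mem_filter, Finset.mem_insert, List.mem_toFinset, Finset.notMem_empty,
          iff_false, not_and, not_lt]
        rintro (rfl | h)
        · exact le_rfl
        · exact (ha _ h).le
      simp [this]
    · rw [Finset.mul_sum, ← Finset.sum_neg_distrib]
      apply Finset.sum_congr rfl
      intro k hk
      have hk' := ha k (by simpa using hk)
      rw [Finset.filter_insert, if_pos hk', Finset.card_insert_of_notMem (by simp [hna] at hna ⊢),
        List.erase_cons_tail (by simpa using hk'.ne), List.map_cons, wordOp_cons]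
      simp only [opOf, LinearMap.mulLeft_apply, mul_smul_comm, pow_succ]
      rw [← neg_smul]
      congr 1
      ring

/-- crossing sign -/
noncomputable def epsSign {J : Type*} [LinearOrder J] {n : ℕ} (j j' : Fin n → J) : ℂ :=
  ∏ k, ∏ l, if j' k < j l then -1 else 1

theorem epsSign_sq {J : Type*} [LinearOrder J] {n : ℕ} (j j' : Fin n → J) :
    epsSign j j' * epsSign j j' = 1 := by
  unfold epsSign
  rw [← Finset.prod_mul_distrib]
  apply Finset.prod_eq_one
  intro k _
  rw [← Finset.prod_mul_distrib]
  apply Finset.prod_eq_one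
  intro l _
  split_ifs <;> norm_num

theorem epsSign_succ {J : Type*} [LinearOrder J] {n : ℕ} (j j' : Fin (n+1) → J)
    (hj : StrictMono j) (m : Fin (n+1)) (hm : j (Fin.last n) < j' m) :
    epsSign j j' = (-1) ^ (Finset.univ.filter fun k => j' k < j (Fin.last n)).card *
      epsSign (j ∘ Fin.castSucc) (j' ∘ m.succAbove) := by
  have h0 : ∀ l, ¬ j' m < j l := fun l h =>
    absurd (hm.trans h) (not_lt.mpr (hj.monotone (Fin.le_last l)))
  have h1 : ((-1 : ℂ)) ^ (Finset.univ.filter fun k => j' k < j (Fin.last n)).card =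
      ∏ k, if j' k < j (Fin.last n) then -1 else 1 := by
    rw [Finset.prod_ite]; simp
  rw [h1]
  unfold epsSign
  rw [Fin.prod_univ_succAbove _ m,
    Fin.prod_univ_succAbove (fun k => if j' k < j (Fin.last n) then (-1 : ℂ) else 1) m]
  have h2 : ∀ k, (∏ l, if j' k < j l then (-1 : ℂ) else 1) = (∏ l : Fin n,
      if j' k < j l.castSucc then (-1 : ℂ) else 1) * if j' k < j (Fin.last n) then -1 else 1 :=
    fun k => Fin.prod_univ_castSucc _
  simp only [h0, if_false, Finset.prod_const_one, one_mul, Function.comp]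
  simp only [h2, Finset.prod_mul_distrib]
  rw [mul_comm]

theorem main_word {J : Type*} [LinearOrder J] (n : ℕ) :
    ∀ (α : Fin n → W) (v : Fin n → Module.Dual ℂ W) (j j' : Fin n → J)
      (_ : StrictMono j) (_ : StrictMono j') (_ : ∀ k l, j k ≠ j' l)
      (L : List (Fin n ⊕ Fin n))
      (_ : L.Pairwise (fun a b => Sum.elim j j' a < Sum.elim j j' b)) (_ : ∀ a, a ∈ L),
      wordOp α v L 1 = ((-1 : ℂ) ^ (n * (n - 1) / 2) * epsSign j j' *
        (Matrix.det (Matrix.of fun k l : Fin n =>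
          v l (α k) * (if j l < j' k then 1 else 0)))) • 1 := by
  induction n with
  | zero =>
    intro α v j j' _ _ _ L _ _
    have : L = [] := by
      cases L with
      | nil => rfl
      | cons a _ => rcases a with a | a <;> exact a.elim0
    subst this
    simp [wordOp, epsSign]
  | succ n ih =>
    intro α v j j' hj hj' hd L hL hmem
    obtain ⟨s, t, rfl⟩ := List.append_of_mem (hmem (Sum.inl (Fin.last n)))
    rw [List.pairwise_append, List.pairwise_cons] at hL
    obtain ⟨hs, ⟨hlt, ht⟩, hst⟩ := hL
    have : ∃ ws : List (Fin (n+1)), ws.map Sum.inr = t := by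
      have : t ∈ Set.range (List.map (Sum.inr : Fin (n+1) → Fin (n+1) ⊕ Fin (n+1))) := by
        rw [Set.range_list_map]
        intro a ha
        rcases a with a | a
        · exact absurd (hlt _ ha) (not_lt.mpr (hj.monotone (Fin.le_last a)))
        · exact ⟨a, rfl⟩
      exact this
    obtain ⟨ws, rfl⟩ := this
    have hws : ws.Pairwise (· < ·) := by
      rw [List.pairwise_map] at ht
      exact ht.imp (fun {a b} h => hj'.lt_iff_lt.mp h)
    have hwmem : ∀ k, k ∈ ws ↔ j (Fin.last n) < j' k := by
      intro k
      constructor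
      · intro h
        exact hlt (Sum.inr k) (List.mem_map_of_mem h)
      · intro h
        have := hmem (Sum.inr k)
        simp only [List.mem_append, List.mem_cons, reduceCtorEq, false_or] at this
        rcases this with h' | h'
        · exact absurd (hst _ h' _ List.mem_cons_self) (not_lt.mpr h.le)
        · simpa using h'
    rw [wordOp_append, wordOp_cons]
    have hc := contract_word α v (v (Fin.last n)) ws hws
    rw [show opOf α v (Sum.inl (Fin.last n)) (wordOp α v (ws.map Sum.inr) 1) = _ from hc,
      wordOp_sum, Matrix.det_succ_column _ (Fin.last n), Finset.mul_sum, Finset.sum_smul]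
    rw [← Finset.sum_subset (Finset.subset_univ ws.toFinset)]
    swap
    · intro k _ hk
      have : ¬ j (Fin.last n) < j' k := by
        rw [← hwmem]; simpa using hk
      simp [this]
    apply Finset.sum_congr rfl
    intro m hm
    rw [List.mem_toFinset] at hm
    have hm' := (hwmem m).mp hm
    have hnd : ws.Nodup := hws.imp (fun {a b} h => h.ne)
    have hL0 : (s ++ (ws.erase m).map Sum.inr).Pairwise
        (fun a b => Sum.elim j j' a < Sum.elim j j' b) := by
      rw [List.pairwise_append]
      refine ⟨hs, ?_, ?_⟩
      · exact ht.sublist (List.erase_sublist.map _)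
      · intro a ha b hb
        exact hst a ha b (List.mem_cons_of_mem _ ((List.erase_sublist.map _).subset hb))
    have hmem0 : ∀ a, a ∈ s ++ (ws.erase m).map Sum.inr ↔
        a ≠ Sum.inl (Fin.last n) ∧ a ≠ Sum.inr m := by
      intro a
      constructor
      · intro ha
        rw [List.mem_append] at ha
        rcases ha with ha | ha
        · constructor
          · rintro rfl
            exact lt_irrefl _ (hst _ ha _ List.mem_cons_self)
          · rintro rfl
            exact lt_irrefl _ (hst _ ha _ (List.mem_cons_of_mem _ (List.mem_map_of_mem hm)))
        · rw [List.mem_map] at ha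
          obtain ⟨k, hk, rfl⟩ := ha
          rw [hnd.mem_erase_iff] at hk
          simp [hk.1]
      · rintro ⟨h1, h2⟩
        have := hmem a
        rw [List.mem_append, List.mem_cons] at this
        rw [List.mem_append]
        rcases this with h | h | h
        · exact Or.inl h
        · exact absurd h h1
        · right
          rw [List.mem_map] at h ⊢
          obtain ⟨k, hk, rfl⟩ := h
          exact ⟨k, (hnd.mem_erase_iff).mpr ⟨fun e => h2 (by rw [e]), hk⟩, rfl⟩
    let f : Fin n ⊕ Fin n → Fin (n+1) ⊕ Fin (n+1) := Sum.map Fin.castSucc m.succAbove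
    have hf : Function.Injective f :=
      Function.Injective.sumMap (Fin.castSucc_injective n) Fin.succAbove_right_injective
    have hex : ∃ L' : List (Fin n ⊕ Fin n), L'.map f = s ++ (ws.erase m).map Sum.inr := by
      have : (s ++ (ws.erase m).map Sum.inr) ∈ Set.range (List.map f) := by
        rw [Set.range_list_map]
        intro a ha
        obtain ⟨h1, h2⟩ := (hmem0 a).mp ha
        rcases a with a | a
        · obtain ⟨b, hb⟩ := Fin.exists_castSucc_eq.mpr (fun e => h1 (by rw [e]) : a ≠ Fin.last n)
          exact ⟨Sum.inl b, by simp [f, hb]⟩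
        · obtain ⟨b, hb⟩ := Fin.exists_succAbove_eq (fun e => h2 (by rw [e]) : a ≠ m)
          exact ⟨Sum.inr b, by simp [f, hb]⟩
      exact this
    obtain ⟨L', hL'⟩ := hex
    have hlab : ∀ a, Sum.elim j j' (f a) =
        Sum.elim (j ∘ Fin.castSucc) (j' ∘ m.succAbove) a := by
      rintro (a | a) <;> rfl
    have hop : ∀ a, opOf α v (f a) = opOf (α ∘ m.succAbove) (v ∘ Fin.castSucc) a := by
      rintro (a | a) <;> rfl
    have hword : wordOp α v (L'.map f) 1 =
        wordOp (α ∘ m.succAbove) (v ∘ Fin.castSucc) L' 1 := by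
      simp only [wordOp, List.foldr_map, hop]
    have hI := ih (α ∘ m.succAbove) (v ∘ Fin.castSucc) (j ∘ Fin.castSucc) (j' ∘ m.succAbove)
      (hj.comp (Fin.strictMono_castSucc)) (hj'.comp (Fin.strictMono_succAbove m))
      (fun k l => hd _ _) L'
      (by
        rw [← hL', List.pairwise_map] at hL0
        simpa only [hlab] using hL0)
      (by
        intro a
        rw [← List.mem_map_of_injective hf, hL', hmem0]
        rcases a with a | a
        · exact ⟨fun e => (Fin.castSucc_lt_last a).ne (Sum.inl_injective e), by simp [f]⟩
        · exact ⟨by simp [f], fun e => Fin.succAbove_ne m a (Sum.inr_injective e)⟩)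
    rw [← wordOp_append, ← hL', hword, hI, smul_smul]
    congr 1
    rw [epsSign_succ j j' hj m hm', Nat.triangle_succ]
    have hcard : (m : ℕ) = (ws.toFinset.filter (· < m)).card +
        (Finset.univ.filter fun k => j' k < j (Fin.last n)).card := by
      rw [← Finset.card_union_of_disjoint, ← Fin.card_Iio m]
      · congr 1
        ext k
        simp only [Finset.mem_Iio, Finset.mem_union, Finset.mem_filter, List.mem_toFinset, hwmem,
          Finset.mem_univ, true_and]
        constructor
        · intro h
          rcases lt_or_gt_of_ne (hd (Fin.last n) k) with h' | h'
          · exact Or.inl ⟨h', h⟩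
          · exact Or.inr h'
        · rintro (h | h)
          · exact h.2
          · exact hj'.lt_iff_lt.mp (h.trans hm')
      · rw [Finset.disjoint_left]
        intro k hk hk'
        simp only [Finset.mem_filter, List.mem_toFinset, hwmem, Finset.mem_univ, true_and] at hk hk'
        exact absurd hk' (not_lt.mpr hk.1.le)
    rw [hcard]
    have hdet : (Matrix.of fun k l : Fin (n+1) =>
          v l (α k) * (if j l < j' k then (1:ℂ) else 0)).submatrix m.succAbove
            (Fin.last n).succAbove = Matrix.of fun k l : Fin n =>
          (v ∘ Fin.castSucc) l ((α ∘ m.succAbove) k) *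
            (if (j ∘ Fin.castSucc) l < (j' ∘ m.succAbove) k then (1:ℂ) else 0) := by
      ext k l
      simp [Fin.succAbove_last]
    rw [hdet, Matrix.of_apply, if_pos hm', Fin.val_last]
    generalize (Finset.univ.filter fun k => j' k < j (Fin.last n)).card = a
    generalize (ws.toFinset.filter (· < m)).card = b
    generalize Matrix.det (R := ℂ) (n := Fin n) _ = D
    have e1 : ((-1 : ℂ) ^ a) * (-1) ^ a = 1 := by rw [← mul_pow]; simp
    have e2 : ((-1 : ℂ) ^ n) * (-1) ^ n = 1 := by rw [← mul_pow]; simp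
    simp only [pow_add]
    linear_combination (-(-1 : ℂ) ^ b * (v (Fin.last n)) (α m) * (-1) ^ (n * (n - 1) / 2) *
      epsSign (j ∘ Fin.castSucc) (j' ∘ m.succAbove) * D) * (e1 * ((-1 : ℂ) ^ n * (-1) ^ n) + e2)

theorem sign_eq_epsSign {J : Type*} [LinearOrder J] {n : ℕ} (j j' : Fin n → J)
    (hj : StrictMono j) (hj' : StrictMono j') (hd : ∀ k l, j k ≠ j' l)
    (π : Equiv.Perm (Fin (n + n)))
    (hπ : StrictMono fun k : Fin (n + n) => Fin.append j j' (π k)) :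
    ((Equiv.Perm.sign π : ℤ) : ℂ) = epsSign j j' := by
  have hlt : ∀ a b, π⁻¹ a < π⁻¹ b ↔ Fin.append j j' a < Fin.append j j' b := by
    intro a b
    rw [← hπ.lt_iff_lt]
    simp
  rw [← Equiv.Perm.sign_inv, Equiv.Perm.sign_eq_prod_prod_Iio]
  simp only [hlt]
  have : ∀ b : Fin (n+n), (∏ a ∈ Finset.Iio b,
      if Fin.append j j' a < Fin.append j j' b then (1 : ℤˣ) else -1) =
      ∏ a, if a < b then (if Fin.append j j' a < Fin.append j j' b then (1 : ℤˣ) else -1) else 1 := by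
    intro b
    rw [← Finset.prod_filter]
    congr 1
    ext; simp
  simp only [this]
  rw [Fin.prod_univ_add]
  simp only [Fin.prod_univ_add, Fin.append_left, Fin.append_right]
  have h1 : ∀ a b : Fin n, (if Fin.castAdd n a < Fin.castAdd n b then
      (if j a < j b then (1 : ℤˣ) else -1) else 1) = 1 := by
    intro a b
    simp only [hj.lt_iff_lt, Fin.lt_def, Fin.val_castAdd]
    split_ifs <;> rfl
  have h2 : ∀ a b : Fin n, (if Fin.natAdd n a < Fin.natAdd n b then
      (if j' a < j' b then (1 : ℤˣ) else -1) else 1) = 1 := by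
    intro a b
    simp only [hj'.lt_iff_lt, Fin.lt_def, Fin.val_natAdd, add_lt_add_iff_left]
    split_ifs <;> rfl
  have h3 : ∀ a b : Fin n, ¬ (Fin.natAdd n a < Fin.castAdd n b) := by
    intro a b
    simp only [Fin.lt_def, Fin.val_natAdd, Fin.val_castAdd]
    omega
  have h4 : ∀ a b : Fin n, (Fin.castAdd n a < Fin.natAdd n b) := by
    intro a b
    simp only [Fin.lt_def, Fin.val_natAdd, Fin.val_castAdd]
    omega
  simp only [h1, h2, h3, h4, if_true, if_false, Finset.prod_const_one, one_mul, mul_one]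
  unfold epsSign
  push_cast
  apply Finset.prod_congr rfl
  intro k _
  apply Finset.prod_congr rfl
  intro l _
  rcases lt_or_gt_of_ne (hd l k) with h | h
  · simp [h, h.not_gt]
  · simp [h, h.not_gt]

end Helpers


/-- Theorem 3 of the paper: let `A₁,…,A_{2n}` be the operators on
`ΛV*` given by `Aᵢ = vᵢ⌟` for `1 ≤ i ≤ n` and `A_{n+m} = (α_m ∧ ·)` for
`1 ≤ m ≤ n`, with labels `jᵢ` (for the contractions) and `j'_{i−n}` (for the wedge
operators) in a linearly ordered set, the two label families being strictly
increasing and disjoint.  If `π` is the permutation of `{1,…,2n}` making the labels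
of `A_{π(1)},…,A_{π(2n)}` strictly increasing, then the matrix
`M_{kl} = α_k(v_l)·1[j'_k ≻ j_l]` satisfies
`det M = (−1)^{n(n−1)/2}·sgn(π)·(A_{π(1)} ∘ ⋯ ∘ A_{π(2n)})(1)`. -/
theorem stmt11 (V : Type*) [AddCommGroup V] [Module ℂ V] [FiniteDimensional ℂ V]
    (n : ℕ) (α : Fin n → Module.Dual ℂ V) (v : Fin n → V)
    {J : Type*} [LinearOrder J] (j j' : Fin n → J)
    (hj : StrictMono j) (hj' : StrictMono j')
    (hdisj : ∀ k l : Fin n, j k ≠ j' l)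
    (A : Fin (n + n) → (ExteriorAlgebra ℂ (Module.Dual ℂ V) →ₗ[ℂ]
        ExteriorAlgebra ℂ (Module.Dual ℂ V)))
    (hA : ∀ i : Fin (n + n),
      A i = if h : (i : ℕ) < n then
          CliffordAlgebra.contractLeft (Q := (0 : QuadraticForm ℂ (Module.Dual ℂ V)))
            (Module.Dual.eval ℂ V (v ⟨(i : ℕ), h⟩))
        else
          LinearMap.mulLeft ℂ
            (ExteriorAlgebra.ι ℂ (α ⟨(i : ℕ) - n, by have := i.isLt; omega⟩)))
    (π : Equiv.Perm (Fin (n + n)))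
    (hπ : StrictMono fun k : Fin (n + n) => Fin.append j j' (π k)) :
    algebraMap ℂ (ExteriorAlgebra ℂ (Module.Dual ℂ V))
        (Matrix.det (Matrix.of fun k l : Fin n =>
          α k (v l) * (if j l < j' k then 1 else 0))) =
      ((-1 : ℂ) ^ (n * (n - 1) / 2) * ((Equiv.Perm.sign π : ℤ) : ℂ)) •
        (List.finRange (n + n)).foldr (fun k acc => A (π k) acc) 1 := by
  have hop : ∀ i, A i = opOf α (fun l => Module.Dual.eval ℂ V (v l)) (finSumFinEquiv.symm i) := by
    intro i
    rw [hA]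
    refine Fin.addCases (fun l => ?_) (fun k => ?_) i
    · rw [finSumFinEquiv_symm_apply_castAdd, dif_pos (by simp)]
      rfl
    · rw [finSumFinEquiv_symm_apply_natAdd, dif_neg (by simp)]
      simp [opOf]
  have hlab : ∀ i, Sum.elim j j' (finSumFinEquiv.symm i) = Fin.append j j' i := by
    intro i
    refine Fin.addCases (fun l => ?_) (fun k => ?_) i
    · rw [finSumFinEquiv_symm_apply_castAdd, Fin.append_left]; rfl
    · rw [finSumFinEquiv_symm_apply_natAdd, Fin.append_right]; rfl
  have hm := main_word n α (fun l => Module.Dual.eval ℂ V (v l)) j j' hj hj' hdisj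
    ((List.finRange (n + n)).map fun k => finSumFinEquiv.symm (π k))
    (by
      rw [List.pairwise_map]
      simp only [hlab]
      exact (List.pairwise_lt_finRange (n+n)).imp (fun {a b} h => hπ h))
    (by
      intro a
      rw [List.mem_map]
      exact ⟨π.symm (finSumFinEquiv a), List.mem_finRange _, by simp⟩)
  have hw : (List.finRange (n + n)).foldr (fun k acc => A (π k) acc) 1 =
      wordOp α (fun l => Module.Dual.eval ℂ V (v l))
        ((List.finRange (n + n)).map fun k => finSumFinEquiv.symm (π k)) 1 := by
    simp only [wordOp, List.foldr_map, hop]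
  rw [hw, hm, sign_eq_epsSign j j' hj hj' hdisj π hπ, smul_smul, Algebra.algebraMap_eq_smul_one]
  congr 1
  have e1 := epsSign_sq j j'
  have e2 : ((-1 : ℂ) ^ (n * (n - 1) / 2)) * (-1) ^ (n * (n - 1) / 2) = 1 := by
    rw [← mul_pow]; simp
  simp only [Module.Dual.eval_apply]
  generalize Matrix.det (R := ℂ) (n := Fin n) _ = D
  linear_combination (-D) * (e1 * ((-1 : ℂ) ^ (n * (n - 1) / 2) * (-1) ^ (n * (n - 1) / 2)) + e2)
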